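/- Let P be as in the context and let Ω ⊆ ℂ be open. Suppose that for every f ∈ C_0^∞(ℝ) with supp f ⊂ Ω ∩ ℝ and every almost holomorphic extension f̃ of f one has −(1/π)∫_ℂ (∂f̃/∂z̄)(z)·(z·1 − P)⁻¹ L(dz) = 0. Then Ω ∩ ℝ is contained in the resolvent set of P, i.e. Ω ∩ ℝ ∩ σ(P) = ∅. -/

import Mathlib

open MeasureTheory Complex Real

noncomputable section

/-- The Cauchy–Riemann operator `∂F/∂z̄ = (∂F/∂x + i ∂F/∂y)/2`. -/
def dbar (F : ℂ → ℂ) (z : ℂ) : ℂ :=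
  (fderiv ℝ F z 1 + Complex.I * fderiv ℝ F z Complex.I) / 2

/-- `F` is an almost holomorphic extension of `f ∈ C_0^∞(ℝ)`. -/
def IsAHExt (f : ℝ → ℂ) (F : ℂ → ℂ) : Prop :=
  ContDiff ℝ (⊤ : ℕ∞) F ∧ HasCompactSupport F ∧ (∀ x : ℝ, F x = f x) ∧
    ∀ N : ℕ, ∃ C : ℝ, ∀ z : ℂ, ‖dbar F z‖ ≤ C * |z.im| ^ N

/-- The resolvent `(z·1 − P)⁻¹` (equal to `0` when `z·1 − P` is not invertible). -/
def res {B : Type*} [NormedAddCommGroup B] [NormedSpace ℂ B] (P : B →L[ℂ] B) (z : ℂ) :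
    B →L[ℂ] B := Ring.inverse (z • (1 : B →L[ℂ] B) - P)

/-- The spectrum of `P` is real. -/
def RealSpectrum {B : Type*} [NormedAddCommGroup B] [NormedSpace ℂ B]
    (P : B →L[ℂ] B) : Prop := ∀ z ∈ spectrum ℂ P, z.im = 0

/-- The resolvent of `P` has locally temperate growth near `ℝ`. -/
def TemperateResolventLoc {B : Type*} [NormedAddCommGroup B] [NormedSpace ℂ B]
    (P : B →L[ℂ] B) : Prop :=
  ∀ R > (0:ℝ), ∃ C N : ℝ, 0 ≤ C ∧ 0 ≤ N ∧ ∀ z : ℂ, z.im ≠ 0 → ‖z‖ ≤ R →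
    ‖res P z‖ ≤ C * |z.im| ^ (-N)

open scoped ContDiff FourierTransform

/-- Smooth and compactly supported functions on the line. -/
def GoodF (f : ℝ → ℂ) : Prop := ContDiff ℝ ∞ f ∧ HasCompactSupport f

/-- All moments are integrable. -/
def GoodK (k : ℝ → ℂ) : Prop := ∀ n : ℕ, Integrable (fun t : ℝ => (t : ℂ) ^ n * k t)

def tmul (k : ℝ → ℂ) : ℝ → ℂ := fun t => (t : ℂ) * k t

/-- The averaged extension. -/
def GG (f k : ℝ → ℂ) (z : ℂ) : ℂ := ∫ t : ℝ, f (z.re + t * z.im) * k t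

lemma GoodK.tmul {k : ℝ → ℂ} (hk : GoodK k) : GoodK (tmul k) := by
  intro n
  refine (hk (n+1)).congr (Filter.Eventually.of_forall fun t => ?_)
  simp only [_root_.tmul]; ring

lemma GoodK.int {k : ℝ → ℂ} (hk : GoodK k) : Integrable k := by simpa using hk 0

lemma GoodF.deriv {f : ℝ → ℂ} (hf : GoodF f) : GoodF (deriv f) :=
  ⟨(contDiff_infty_iff_deriv.1 hf.1).2, hf.2.deriv⟩

lemma GoodF.bdd {f : ℝ → ℂ} (hf : GoodF f) : ∃ C, 0 ≤ C ∧ ∀ x, ‖f x‖ ≤ C := by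
  obtain ⟨C, hC⟩ := hf.2.exists_bound_of_continuous hf.1.continuous
  exact ⟨C, (norm_nonneg _).trans (hC 0), hC⟩

lemma integrand_integrable {f k : ℝ → ℂ} (hf : GoodF f) (hk : GoodK k) (z : ℂ) :
    Integrable (fun t : ℝ => f (z.re + t * z.im) * k t) := by
  obtain ⟨C, _, hC⟩ := hf.bdd
  refine hk.int.bdd_mul (c := C) ?_ (Filter.Eventually.of_forall fun t => hC _)
  have := hf.1.continuous
  exact (by fun_prop : Continuous fun t : ℝ => f (z.re + t * z.im)).aestronglyMeasurable

lemma GG_bdd {f k : ℝ → ℂ} (hf : GoodF f) (hk : GoodK k) : ∃ C, 0 ≤ C ∧ ∀ z, ‖GG f k z‖ ≤ C := by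
  obtain ⟨C, hC0, hC⟩ := hf.bdd
  refine ⟨∫ t, C * ‖k t‖, integral_nonneg fun t => by positivity, fun z => ?_⟩
  refine norm_integral_le_of_norm_le (hk.int.norm.const_mul C) (Filter.Eventually.of_forall fun t => ?_)
  rw [norm_mul]
  gcongr
  exact hC _

lemma GG_hasFDerivAt {f k : ℝ → ℂ} (hf : GoodF f) (hk : GoodK k) (z : ℂ) :
    HasFDerivAt (GG f k) (Complex.reCLM.smulRight (GG (deriv f) k z) +
      Complex.imCLM.smulRight (GG (deriv f) (tmul k) z)) z := by
  obtain ⟨C, hC0, hC⟩ := hf.deriv.bdd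
  have hcont := hf.1.continuous
  have hcont' := hf.deriv.1.continuous
  have i1 := integrand_integrable hf.deriv hk z
  have i2 := integrand_integrable hf.deriv hk.tmul z
  let F' : ℂ → ℝ → (ℂ →L[ℝ] ℂ) := fun z t =>
    Complex.reCLM.smulRight (deriv f (z.re + t * z.im) * k t) +
      Complex.imCLM.smulRight (deriv f (z.re + t * z.im) * tmul k t)
  have j1 : Integrable (fun t => Complex.reCLM.smulRight (deriv f (z.re + t * z.im) * k t)) :=
    (ContinuousLinearMap.smulRightL ℝ ℂ ℂ Complex.reCLM).integrable_comp i1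
  have j2 : Integrable (fun t => Complex.imCLM.smulRight (deriv f (z.re + t * z.im) * tmul k t)) :=
    (ContinuousLinearMap.smulRightL ℝ ℂ ℂ Complex.imCLM).integrable_comp i2
  have key : ∫ t, F' z t = Complex.reCLM.smulRight (GG (deriv f) k z) +
      Complex.imCLM.smulRight (GG (deriv f) (tmul k) z) := by
    have e1 : ∫ t, Complex.reCLM.smulRight (deriv f (z.re + t * z.im) * k t) =
        Complex.reCLM.smulRight (GG (deriv f) k z) :=
      (ContinuousLinearMap.smulRightL ℝ ℂ ℂ Complex.reCLM).integral_comp_comm i1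
    have e2 : ∫ t, Complex.imCLM.smulRight (deriv f (z.re + t * z.im) * tmul k t) =
        Complex.imCLM.smulRight (GG (deriv f) (tmul k) z) :=
      (ContinuousLinearMap.smulRightL ℝ ℂ ℂ Complex.imCLM).integral_comp_comm i2
    rw [← e1, ← e2, ← integral_add j1 j2]
  rw [← key]
  have jm : AEStronglyMeasurable (F' z) volume :=
    j1.aestronglyMeasurable.add j2.aestronglyMeasurable
  refine hasFDerivAt_integral_of_dominated_of_fderiv_le (F' := F') (F := fun z t => f (z.re + t * z.im) * k t)
    (bound := fun t => C * ‖k t‖ + C * ‖tmul k t‖) (s := Set.univ) Filter.univ_mem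
    (Filter.Eventually.of_forall fun w => (integrand_integrable hf hk w).aestronglyMeasurable)
    (integrand_integrable hf hk z) jm ?_
    ((hk.int.norm.const_mul C).add (hk.tmul.int.norm.const_mul C)) ?_
  · refine Filter.Eventually.of_forall fun t w _ => ?_
    refine (norm_add_le _ _).trans (add_le_add ?_ ?_)
    · rw [ContinuousLinearMap.norm_smulRight_apply, Complex.reCLM_norm, one_mul, norm_mul]
      gcongr; exact hC _
    · rw [ContinuousLinearMap.norm_smulRight_apply, Complex.imCLM_norm, one_mul, norm_mul]
      gcongr; exact hC _
  · refine Filter.Eventually.of_forall fun t w _ => ?_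
    have hd : HasDerivAt f (deriv f (w.re + t * w.im)) (w.re + t * w.im) :=
      ((hf.1.differentiable (by simp)) _).hasDerivAt
    have hl : HasFDerivAt (fun w : ℂ => w.re + t * w.im) (Complex.reCLM + t • Complex.imCLM) w :=
      (Complex.reCLM.hasFDerivAt).add ((Complex.imCLM.hasFDerivAt).const_smul t)
    have := (hd.hasFDerivAt.comp (f := fun w : ℂ => w.re + t * w.im) w hl).mul_const (k t)
    refine this.congr_fderiv ?_
    ext v
    simp [F', tmul]
    ring

lemma GG_contDiff_nat (n : ℕ) : ∀ {f k : ℝ → ℂ}, GoodF f → GoodK k → ContDiff ℝ n (GG f k) := by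
  induction n with
  | zero =>
    intro f k hf hk
    rw [Nat.cast_zero, contDiff_zero]
    exact continuous_iff_continuousAt.2 fun z => (GG_hasFDerivAt hf hk z).continuousAt
  | succ n ih =>
    intro f k hf hk
    push_cast
    rw [contDiff_succ_iff_hasFDerivAt]
    refine ⟨_, ?_, GG_hasFDerivAt hf hk⟩
    have h1 := ih hf.deriv hk
    have h2 := ih hf.deriv hk.tmul
    exact ((ContinuousLinearMap.smulRightL ℝ ℂ ℂ Complex.reCLM).contDiff.comp h1).add
      ((ContinuousLinearMap.smulRightL ℝ ℂ ℂ Complex.imCLM).contDiff.comp h2)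

lemma GG_contDiff {f k : ℝ → ℂ} (hf : GoodF f) (hk : GoodK k) : ContDiff ℝ ∞ (GG f k) :=
  contDiff_infty.2 fun n => GG_contDiff_nat n hf hk

lemma GG_flat (N : ℕ) : ∀ {f k : ℝ → ℂ}, GoodF f → GoodK k → ∀ S : Set ℝ,
    (∀ n : ℕ, ∀ x ∈ S, iteratedDeriv n f x * ∫ t : ℝ, (t : ℂ) ^ n * k t = 0) →
    ∃ C, 0 ≤ C ∧ ∀ z : ℂ, z.re ∈ S → ‖GG f k z‖ ≤ C * |z.im| ^ N := by
  induction N with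
  | zero =>
    intro f k hf hk S _
    obtain ⟨C, h0, hC⟩ := GG_bdd hf hk
    exact ⟨C, h0, fun z _ => by simpa using hC z⟩
  | succ N ih =>
    intro f k hf hk S hS
    obtain ⟨C, h0, hC⟩ := ih hf.deriv hk.tmul S (by
      intro n x hx
      have := hS (n+1) x hx
      rw [iteratedDeriv_succ'] at this
      rw [← this]
      congr 2
      ext t
      simp only [tmul]; ring)
    refine ⟨C, h0, fun z hz => ?_⟩
    let p : ℝ → ℂ := fun s => ⟨z.re, s * z.im⟩
    have hp : ∀ s, HasDerivAt p (z.im * I) s := by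
      intro s
      have : p = fun s : ℝ => (z.re : ℂ) + s * (z.im * I) := by
        ext s; apply Complex.ext <;> simp [p]
      rw [this]
      simpa using ((Complex.ofRealCLM.hasDerivAt (x := s)).mul_const (z.im * I)).const_add (z.re : ℂ)
    have hd : ∀ s ∈ Set.Icc (0:ℝ) 1, HasDerivWithinAt (fun s => GG f k (p s))
        (z.im * GG (deriv f) (tmul k) (p s)) (Set.Icc (0:ℝ) 1) s := by
      intro s _
      have := (GG_hasFDerivAt hf hk (p s)).comp_hasDerivAt s (hp s)
      refine HasDerivAt.hasDerivWithinAt ?_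
      refine this.congr_deriv ?_
      simp
    have hb := norm_image_sub_le_of_norm_deriv_le_segment_01' hd (C := C * |z.im| ^ (N+1)) (by
      intro s hs
      rw [norm_mul, Complex.norm_real, Real.norm_eq_abs]
      have h1 := hC (p s) hz
      have h2 : |(p s).im| ≤ |z.im| := by
        simp only [p, abs_mul, abs_of_nonneg hs.1]
        exact mul_le_of_le_one_left (abs_nonneg _) hs.2.le
      calc |z.im| * ‖GG (deriv f) (tmul k) (p s)‖ ≤ |z.im| * (C * |z.im| ^ N) := by
            gcongr
            exact h1.trans (by gcongr)
        _ = _ := by ring)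
    have hp1 : p 1 = z := by apply Complex.ext <;> simp [p]
    have hp0 : GG f k (p 0) = 0 := by
      have := hS 0 z.re hz
      simp only [iteratedDeriv_zero, pow_zero, one_mul] at this
      simp only [GG, p, zero_mul, mul_zero, add_zero]
      rw [← this, integral_const_mul]
    rwa [hp1, hp0, sub_zero] at hb

lemma exists_k : ∃ k : ℝ → ℂ, GoodK k ∧ ∀ n : ℕ, ∫ t : ℝ, (t : ℂ) ^ n * k t = I ^ n := by
  let b : ContDiffBump (0:ℝ) := ⟨1, 2, by norm_num, by norm_num⟩
  let e : ℝ → ℂ := fun x => cexp ((2 * π : ℂ) * x)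
  let c : ℝ → ℂ := fun x => (b x : ℂ) * e x
  have he : ContDiff ℝ ∞ e := by
    have : ContDiff ℝ ∞ (fun x : ℝ => (x : ℂ)) := Complex.ofRealCLM.contDiff
    exact (contDiff_const.mul this).cexp
  have hc1 : ContDiff ℝ ∞ c := (Complex.ofRealCLM.contDiff.comp b.contDiff).mul he
  have hc2 : HasCompactSupport c :=
    (b.hasCompactSupport.comp_left (g := fun x : ℝ => (x : ℂ)) (by simp)).mul_right
  let cs : SchwartzMap ℝ ℂ := hc2.toSchwartzMap hc1
  let ks : SchwartzMap ℝ ℂ := 𝓕⁻ cs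
  have hk : GoodK ks := by
    intro n
    have := ks.integrable_pow_mul volume n
    refine this.mono' ?_ (Filter.Eventually.of_forall fun t => by simp)
    have := ks.continuous
    exact (by fun_prop : Continuous fun t : ℝ => (t:ℂ)^n * ks t).aestronglyMeasurable
  have hF : 𝓕 (ks : ℝ → ℂ) = c := by
    rw [← SchwartzMap.fourier_coe]
    simp only [ks, FourierTransform.fourier_fourierInv_eq]
    rfl
  refine ⟨ks, hk, fun n => ?_⟩
  have h1 := Real.iteratedDeriv_fourier (f := ks) (N := ⊤) (n := n)
    (fun n _ => by simpa using hk n) le_top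
  rw [hF] at h1
  have h2 := congrFun h1 0
  have he' : ∀ n, iteratedDeriv n e = fun x => (2 * π : ℂ) ^ n * e x := by
    intro n
    induction n with
    | zero => simp
    | succ n ih =>
      rw [iteratedDeriv_succ, ih]
      ext x
      have : HasDerivAt e (e x * ((2 * π : ℂ) * 1)) x :=
        ((Complex.ofRealCLM.hasDerivAt (x := x)).const_mul (2 * π : ℂ)).cexp
      rw [(this.const_mul _).deriv]
      ring
  have hce : c =ᶠ[nhds 0] e := by
    filter_upwards [b.eventuallyEq_one] with x hx
    simp [c, hx]
  rw [hce.iteratedDeriv_eq, he', Real.fourier_eq] at h2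
  simp only [inner_zero_right, neg_zero, AddChar.map_zero_eq_one, one_smul, smul_eq_mul, mul_pow, e,
    mul_assoc, integral_const_mul, Complex.ofReal_zero, mul_zero, Complex.exp_zero, mul_one] at h2
  have hI : (-2:ℂ)^n * I^n * (π:ℂ)^n ≠ 0 := by
    simp [Complex.I_ne_zero, Real.pi_ne_zero]
  apply mul_left_cancel₀ hI
  have hII : (-2:ℂ)^n * I^n * I^n = 2^n := by
    rw [← mul_pow, ← mul_pow, mul_assoc, Complex.I_mul_I]; norm_num
  have : (-2:ℂ)^n * I^n * (π:ℂ)^n * I^n = 2^n * (π:ℂ)^n := by rw [← hII]; ring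
  rw [this, h2]
  ring

lemma dbar_GG {f k : ℝ → ℂ} (hf : GoodF f) (hk : GoodK k) (z : ℂ) :
    dbar (GG f k) z = GG (deriv f) (fun t => k t + I * tmul k t) z / 2 := by
  rw [dbar, (GG_hasFDerivAt hf hk z).fderiv]
  have : GG (deriv f) (fun t => k t + I * tmul k t) z =
      GG (deriv f) k z + I * GG (deriv f) (tmul k) z := by
    simp only [GG]
    rw [← integral_const_mul, ← integral_add (integrand_integrable hf.deriv hk z)
      ((integrand_integrable hf.deriv hk.tmul z).const_mul I)]
    congr 1
    ext t
    ring
  rw [this]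
  simp

lemma dbar_mul {u v : ℂ → ℂ} {z : ℂ} (hu : DifferentiableAt ℝ u z) (hv : DifferentiableAt ℝ v z) :
    dbar (fun z => u z * v z) z = u z * dbar v z + v z * dbar u z := by
  simp only [dbar]
  rw [fderiv_fun_mul hu hv]
  simp
  ring

lemma dbar_continuous {u : ℂ → ℂ} (hu : ContDiff ℝ ∞ u) : Continuous (dbar u) := by
  have : Continuous (fderiv ℝ u) := hu.continuous_fderiv (by simp)
  unfold dbar
  fun_prop

lemma dbar_compact {u : ℂ → ℂ} (hu : HasCompactSupport u) : HasCompactSupport (dbar u) :=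
  (hu.fderiv ℝ).comp_left (g := fun L : ℂ →L[ℝ] ℂ => (L 1 + I * L I) / 2) (by simp)

lemma exists_ext (x0 ε : ℝ) (hε : 0 < ε) : ∃ (f : ℝ → ℂ) (F : ℂ → ℂ), GoodF f ∧ f x0 = 1 ∧
    tsupport f ⊆ Metric.closedBall x0 (ε / 2) ∧ IsAHExt f F := by
  obtain ⟨k, hk, hm⟩ := exists_k
  let b : ContDiffBump x0 := ⟨ε / 4, ε / 2, by linarith, by linarith⟩
  let χ : ContDiffBump (x0 : ℂ) := ⟨ε, 2 * ε, by linarith, by linarith⟩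
  let f : ℝ → ℂ := fun x => (b x : ℂ)
  let X : ℂ → ℂ := fun z => (χ z : ℂ)
  have hf : GoodF f := ⟨Complex.ofRealCLM.contDiff.comp b.contDiff,
    b.hasCompactSupport.comp_left (g := fun x : ℝ => (x : ℂ)) (by simp)⟩
  have hts : tsupport f ⊆ Metric.closedBall x0 (ε / 2) := by
    have h1 : tsupport f ⊆ tsupport b := by
      refine closure_mono fun x hx => ?_
      simp only [Function.mem_support, f] at hx ⊢
      exact_mod_cast hx
    rw [b.tsupport_eq] at h1
    exact h1
  have hX : ContDiff ℝ ∞ X := Complex.ofRealCLM.contDiff.comp χ.contDiff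
  have hXc : HasCompactSupport X :=
    χ.hasCompactSupport.comp_left (g := fun x : ℝ => (x : ℂ)) (by simp)
  have hG := GG_contDiff hf hk
  have hkk : GoodK (fun t => k t + I * tmul k t) := by
    intro n
    refine ((hk n).add ((hk.tmul n).const_mul I)).congr (Filter.Eventually.of_forall fun t => ?_)
    simp only [Pi.add_apply]; ring
  have hmm : ∀ n : ℕ, ∫ t : ℝ, (t : ℂ) ^ n * (k t + I * tmul k t) = 0 := by
    intro n
    have : ∀ t : ℝ, (t : ℂ) ^ n * (k t + I * tmul k t) =
        (t : ℂ) ^ n * k t + I * ((t : ℂ) ^ (n+1) * k t) := by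
      intro t; simp only [tmul]; ring
    simp only [this]
    rw [integral_add (hk n) ((hk (n+1)).const_mul I), integral_const_mul, hm, hm, pow_succ]
    linear_combination I ^ n * Complex.I_mul_I
  refine ⟨f, fun z => X z * GG f k z, hf, ?_, hts, hX.mul hG, hXc.mul_right, ?_, ?_⟩
  · have : b x0 = 1 := b.one_of_mem_closedBall (by simp [b.rIn_pos.le])
    simp [f, this]
  · intro x
    have h1 : GG f k x = f x := by
      have := hm 0
      simp only [pow_zero, one_mul] at this
      simp only [GG, Complex.ofReal_im, Complex.ofReal_re, mul_zero, add_zero]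
      rw [integral_const_mul, this, mul_one]
    show X x * GG f k x = f x
    rw [h1]
    by_cases hx : x ∈ tsupport f
    · have h2 := hts hx
      have : χ (x : ℂ) = 1 := by
        apply χ.one_of_mem_closedBall
        rw [Metric.mem_closedBall] at h2 ⊢
        rw [Complex.dist_of_im_eq (by simp)]
        simp only [Complex.ofReal_re, χ]
        linarith
      simp [X, this]
    · rw [image_eq_zero_of_notMem_tsupport hx, mul_zero]
  · intro N
    obtain ⟨C1, h10, h1⟩ := GG_flat N hf.deriv hkk Set.univ (by
      intro n x _; rw [hmm, mul_zero])
    obtain ⟨C2, h20, h2⟩ := GG_flat N hf hk (tsupport f)ᶜ (by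
      intro n x hx
      have : iteratedDeriv n f x = 0 := by
        rw [iteratedDeriv_eq_iteratedFDeriv]
        have : iteratedFDeriv ℝ n f x = 0 := by
          by_contra h
          exact hx (support_iteratedFDeriv_subset n h)
        simp [this]
      rw [this, zero_mul])
    obtain ⟨C3, h30, h3⟩ := GG_bdd hf hk
    obtain ⟨D, hD⟩ := (dbar_compact hXc).exists_bound_of_continuous (dbar_continuous hX)
    have hD0 : 0 ≤ D := (norm_nonneg _).trans (hD 0)
    refine ⟨C1 + (C2 + C3 * (2 / ε) ^ N) * D, fun z => ?_⟩
    rw [dbar_mul (hX.differentiable (by simp) _) (hG.differentiable (by simp) _)]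
    have hXle : ‖X z‖ ≤ 1 := by
      simp only [X, Complex.norm_real, Real.norm_eq_abs, abs_of_nonneg χ.nonneg, χ.le_one]
    have hA : ‖X z * dbar (GG f k) z‖ ≤ C1 * |z.im| ^ N := by
      rw [norm_mul, dbar_GG hf hk, norm_div]
      have := h1 z trivial
      have h2 : ‖(2:ℂ)‖ = 2 := by simp
      rw [h2]
      have h3 := norm_nonneg (GG (deriv f) (fun t => k t + I * tmul k t) z)
      calc _ ≤ 1 * (‖GG (deriv f) (fun t => k t + I * tmul k t) z‖ / 2) := by gcongr
        _ ≤ _ := by linarith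
    have hB : ‖GG f k z * dbar X z‖ ≤ ((C2 + C3 * (2 / ε) ^ N) * D) * |z.im| ^ N := by
      by_cases hz : z ∈ Metric.ball (x0 : ℂ) ε
      · have : X =ᶠ[nhds z] fun _ => 1 := by
          filter_upwards [χ.eventuallyEq_one_of_mem_ball hz] with w hw
          simp [X, hw]
        have : dbar X z = 0 := by
          rw [dbar, this.fderiv_eq]; simp
        rw [this, mul_zero, norm_zero]
        positivity
      · have hGz : ‖GG f k z‖ ≤ (C2 + C3 * (2 / ε) ^ N) * |z.im| ^ N := by
          by_cases hx : z.re ∈ tsupport f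
          · have hx2 := hts hx
            rw [Metric.mem_closedBall, Real.dist_eq] at hx2
            rw [Metric.mem_ball, dist_eq_norm, not_lt] at hz
            have := Complex.norm_le_abs_re_add_abs_im (z - x0)
            simp only [Complex.sub_re, Complex.sub_im, Complex.ofReal_re, Complex.ofReal_im,
              sub_zero] at this
            have him : ε / 2 ≤ |z.im| := by linarith
            have h1le : 1 ≤ (2 / ε) * |z.im| := by
              rw [div_mul_eq_mul_div, le_div_iff₀ hε]; linarith
            have : 1 ≤ (2 / ε) ^ N * |z.im| ^ N := by
              rw [← mul_pow]; exact one_le_pow₀ h1le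
            calc ‖GG f k z‖ ≤ C3 * 1 := by simpa using h3 z
              _ ≤ C3 * ((2 / ε) ^ N * |z.im| ^ N) := by gcongr
              _ ≤ C2 * |z.im| ^ N + C3 * ((2 / ε) ^ N * |z.im| ^ N) :=
                le_add_of_nonneg_left (by positivity)
              _ = _ := by ring
          · refine (h2 z hx).trans ?_
            gcongr
            exact le_add_of_nonneg_right (by positivity)
        rw [norm_mul]
        calc _ ≤ ((C2 + C3 * (2 / ε) ^ N) * |z.im| ^ N) * D := by
              gcongr; exact hD z
          _ = _ := by ring
    calc _ ≤ _ := norm_add_le _ _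
      _ ≤ _ := add_le_add hA hB
      _ = _ := by ring

/-- The regularised Cauchy kernel. -/
def KK (e : ℝ) (z : ℂ) : ℂ := (starRingEnd ℂ) z / (z * (starRingEnd ℂ) z + (e : ℂ) ^ 2)

lemma KK_den {e : ℝ} (he : e ≠ 0) (z : ℂ) : z * (starRingEnd ℂ) z + (e : ℂ) ^ 2 ≠ 0 := by
  rw [Complex.mul_conj]
  have : (0:ℝ) < Complex.normSq z + e ^ 2 := by
    have := Complex.normSq_nonneg z
    positivity
  exact_mod_cast this.ne'

lemma KK_hasFDerivAt {e : ℝ} (he : e ≠ 0) (z : ℂ) : ∃ L : ℂ →L[ℝ] ℂ, HasFDerivAt (KK e) L z ∧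
    ∀ v, L v = ((e : ℂ) ^ 2 * (starRingEnd ℂ) v - (starRingEnd ℂ) z ^ 2 * v) /
      (z * (starRingEnd ℂ) z + (e : ℂ) ^ 2) ^ 2 := by
  have h1 : HasFDerivAt (fun z : ℂ => (starRingEnd ℂ) z) (Complex.conjCLE : ℂ →L[ℝ] ℂ) z :=
    Complex.conjCLE.hasFDerivAt
  have h2 := (((hasFDerivAt_id (𝕜 := ℝ) z).mul h1).add_const ((e : ℂ) ^ 2))
  have h3 := h1.mul ((hasDerivAt_inv (KK_den he z)).hasFDerivAt.restrictScalars ℝ |>.comp z h2)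
  refine ⟨_, h3.congr_of_eventuallyEq (Filter.Eventually.of_forall fun w => ?_), fun v => ?_⟩
  · simp [KK, div_eq_mul_inv]
  · have := KK_den he z
    simp
    field_simp
    ring

lemma KK_contDiff {e : ℝ} (he : e ≠ 0) : ContDiff ℝ ∞ (KK e) := by
  have h1 : ContDiff ℝ ∞ (fun z : ℂ => (starRingEnd ℂ) z) := Complex.conjCLE.contDiff
  unfold KK
  simp only [div_eq_mul_inv]
  exact h1.mul (((contDiff_id.mul h1).add contDiff_const).inv (KK_den he))

lemma dbar_KK {e : ℝ} (he : e ≠ 0) (z : ℂ) :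
    dbar (KK e) z = (e : ℂ) ^ 2 / (z * (starRingEnd ℂ) z + (e : ℂ) ^ 2) ^ 2 := by
  obtain ⟨L, hL, hv⟩ := KK_hasFDerivAt he z
  have := KK_den he z
  rw [dbar, hL.fderiv, hv, hv, map_one, Complex.conj_I]
  rw [mul_div_assoc', ← add_div, div_right_comm]
  congr 1
  linear_combination (-(e : ℂ) ^ 2 / 2 - (starRingEnd ℂ) z ^ 2 / 2) * Complex.I_sq

lemma KK_parts {e : ℝ} (he : e ≠ 0) {F : ℂ → ℂ} (hF : ContDiff ℝ ∞ F) (hc : HasCompactSupport F) :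
    ∫ z, KK e z * dbar F z = - ∫ z, dbar (KK e) z * F z := by
  have hK := KK_contDiff he
  have cK := hK.continuous
  have cF := hF.continuous
  have cK' : Continuous (fderiv ℝ (KK e)) := hK.continuous_fderiv (by simp)
  have cF' : Continuous (fderiv ℝ F) := hF.continuous_fderiv (by simp)
  have i1 : ∀ v, Integrable (fun z => fderiv ℝ (KK e) z v * F z) := fun v =>
    (by fun_prop : Continuous (fun z => fderiv ℝ (KK e) z v * F z)).integrable_of_hasCompactSupport
      hc.mul_left
  have i2 : ∀ v, Integrable (fun z => KK e z * fderiv ℝ F z v) := fun v =>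
    (by fun_prop : Continuous (fun z => KK e z * fderiv ℝ F z v)).integrable_of_hasCompactSupport
      ((hc.fderiv_apply ℝ v).mul_left)
  have i3 : Integrable (fun z => KK e z * F z) :=
    (by fun_prop : Continuous (fun z => KK e z * F z)).integrable_of_hasCompactSupport
      hc.mul_left
  have ip : ∀ v, ∫ z, KK e z * fderiv ℝ F z v = - ∫ z, fderiv ℝ (KK e) z v * F z := fun v =>
    integral_mul_fderiv_eq_neg_fderiv_mul_of_integrable (i1 v) (i2 v) i3
      (fun z _ => hK.differentiable (by simp) z) (fun z _ => hF.differentiable (by simp) z)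
  have e1 : ∀ z, KK e z * dbar F z =
      (1/2) * (KK e z * fderiv ℝ F z 1) + (I/2) * (KK e z * fderiv ℝ F z I) := by
    intro z; simp only [dbar]; ring
  have e2 : ∀ z, dbar (KK e) z * F z =
      (1/2) * (fderiv ℝ (KK e) z 1 * F z) + (I/2) * (fderiv ℝ (KK e) z I * F z) := by
    intro z; simp only [dbar]; ring
  simp only [e1, e2]
  rw [integral_add ((i2 1).const_mul _) ((i2 I).const_mul _),
    integral_add ((i1 1).const_mul _) ((i1 I).const_mul _)]
  simp only [integral_const_mul, ip]
  ring

lemma KK_scale {e : ℝ} (he : 0 < e) (F : ℂ → ℂ) :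
    ∫ z, dbar (KK e) z * F z = ∫ w : ℂ, (((1 + ‖w‖ ^ 2) ^ (-2 : ℝ) : ℝ) : ℂ) * F (e • w) := by
  have h := Measure.integral_comp_smul_of_nonneg (volume : Measure ℂ)
    (fun z => dbar (KK e) z * F z) e (hR := he.le)
  rw [Complex.finrank_real_complex] at h
  have h2 : ∫ z, dbar (KK e) z * F z = (e ^ 2 : ℝ) • ∫ z : ℂ, dbar (KK e) (e • z) * F (e • z) := by
    rw [h, smul_smul, mul_inv_cancel₀ (by positivity), one_smul]
  rw [h2, ← integral_smul]
  congr 1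
  ext w
  rw [dbar_KK he.ne']
  have hp : (0:ℝ) < 1 + ‖w‖ ^ 2 := by positivity
  have : (1 + ‖w‖ ^ 2) ^ (-2 : ℝ) = ((1 + ‖w‖ ^ 2) ^ 2)⁻¹ := by
    rw [Real.rpow_neg hp.le]; norm_num
  rw [this, Complex.mul_conj, Complex.normSq_eq_norm_sq, norm_smul, Real.norm_eq_abs, mul_pow,
    sq_abs]
  have hp' : (1 + (‖w‖ : ℂ) ^ 2) ≠ 0 := by exact_mod_cast hp.ne'
  have he' : (e : ℂ) ≠ 0 := by exact_mod_cast he.ne'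
  have hp2 : ((e : ℂ) ^ 2 * (‖w‖ : ℂ) ^ 2 + (e : ℂ) ^ 2) ≠ 0 := by
    have : ((e : ℂ) ^ 2 * (‖w‖ : ℂ) ^ 2 + (e : ℂ) ^ 2) = (e : ℂ) ^ 2 * (1 + (‖w‖ : ℂ) ^ 2) := by ring
    rw [this]; exact mul_ne_zero (pow_ne_zero _ he') hp'
  rw [Complex.real_smul]
  push_cast
  have hfac : ((e : ℂ) ^ 2 * (‖w‖ : ℂ) ^ 2 + (e : ℂ) ^ 2) = (e : ℂ) ^ 2 * (1 + (‖w‖ : ℂ) ^ 2) := by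
    ring
  rw [hfac]
  field_simp

lemma pompeiu {F : ℂ → ℂ} (hF : ContDiff ℝ ∞ F) (hc : HasCompactSupport F)
    (hi : Integrable (fun z => dbar F z / z)) :
    ∃ c : ℂ, c ≠ 0 ∧ ∫ z, dbar F z / z = c * F 0 := by
  let p : ℂ → ℝ := fun w => (1 + ‖w‖ ^ 2) ^ (-2 : ℝ)
  have hp : Integrable p := by
    have := integrable_rpow_neg_one_add_norm_sq (E := ℂ) (μ := volume) (r := 4)
      (by rw [Complex.finrank_real_complex]; norm_num)
    convert! this using 3
    norm_num
  have hpp : 0 < ∫ w, p w := by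
    rw [integral_pos_iff_support_of_nonneg (fun w => by positivity) hp]
    have : Function.support p = Set.univ := by
      ext w; simp only [Function.mem_support, Set.mem_univ, iff_true, p]; positivity
    rw [this]
    simp
  obtain ⟨D, hD⟩ := hc.exists_bound_of_continuous hF.continuous
  let s : ℕ → ℝ := fun n => 1 / ((n : ℝ) + 1)
  have hs : ∀ n, 0 < s n := fun n => by positivity
  have hs0 : Filter.Tendsto s Filter.atTop (nhds 0) := tendsto_one_div_add_atTop_nhds_zero_nat
  have cd := dbar_continuous hF
  -- left limit
  have l1 : Filter.Tendsto (fun n => ∫ z, KK (s n) z * dbar F z) Filter.atTop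
      (nhds (∫ z, dbar F z / z)) := by
    refine tendsto_integral_of_dominated_convergence (fun z => ‖dbar F z / z‖)
      (fun n => (((KK_contDiff (hs n).ne').continuous.mul cd).aestronglyMeasurable)) hi.norm
      (fun n => ?_) ?_
    · have : ∀ᵐ z : ℂ, z ≠ 0 := by
        simp [ae_iff]
      filter_upwards [this] with z hz
      rw [norm_mul, norm_div, div_eq_mul_inv, mul_comm]
      gcongr
      rw [KK, norm_div, Complex.norm_conj, Complex.mul_conj, Complex.normSq_eq_norm_sq]
      have h0 : 0 < ‖z‖ := norm_pos_iff.2 hz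
      have : ‖((‖z‖ ^ 2 : ℝ) : ℂ) + ((s n : ℝ) : ℂ) ^ 2‖ = ‖z‖ ^ 2 + s n ^ 2 := by
        rw [← Complex.ofReal_pow, ← Complex.ofReal_add, Complex.norm_real, Real.norm_eq_abs,
          abs_of_nonneg (by positivity)]
      rw [this, div_le_iff₀ (by positivity)]
      field_simp
      nlinarith [sq_nonneg (s n)]
    · have : ∀ᵐ z : ℂ, z ≠ 0 := by
        simp [ae_iff]
      filter_upwards [this] with z hz
      have hz' : (starRingEnd ℂ) z ≠ 0 := by simpa using hz
      have h1 : Filter.Tendsto (fun n => KK (s n) z) Filter.atTop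
          (nhds ((starRingEnd ℂ) z / (z * (starRingEnd ℂ) z + ((0:ℝ) : ℂ) ^ 2))) := by
        unfold KK
        refine tendsto_const_nhds.div (tendsto_const_nhds.add
          (((Complex.continuous_ofReal.tendsto 0).comp hs0).pow 2)) ?_
        simp [hz]
      have h2 := h1.mul_const (dbar F z)
      convert h2 using 2
      simp
      field_simp
  have l2 : Filter.Tendsto (fun n => ∫ z, KK (s n) z * dbar F z) Filter.atTop
      (nhds (-(∫ w, (p w : ℂ) * F 0))) := by
    have : ∀ n, ∫ z, KK (s n) z * dbar F z = -∫ w, (p w : ℂ) * F (s n • w) := fun n => by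
      rw [KK_parts (hs n).ne' hF hc, KK_scale (hs n)]
    simp only [this]
    refine Filter.Tendsto.neg ?_
    refine tendsto_integral_of_dominated_convergence (fun w => p w * D) (fun n => ?_)
      (hp.mul_const D) (fun n => ?_) ?_
    · have := hF.continuous
      exact hp.ofReal.aestronglyMeasurable.mul
        (by fun_prop : Continuous fun w => F (s n • w)).aestronglyMeasurable
    · refine Filter.Eventually.of_forall fun w => ?_
      have : 0 ≤ p w := by positivity
      rw [norm_mul, Complex.norm_real, Real.norm_eq_abs, abs_of_nonneg this]
      gcongr
      exact hD _
    · refine Filter.Eventually.of_forall fun w => ?_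
      refine Filter.Tendsto.const_mul _ ?_
      have h1 : Filter.Tendsto (fun n => s n • w) Filter.atTop (nhds ((0:ℝ) • w)) :=
        hs0.smul_const w
      rw [zero_smul] at h1
      exact (hF.continuous.tendsto 0).comp h1
  refine ⟨-((∫ w, p w : ℝ) : ℂ), ?_, ?_⟩
  · rw [neg_ne_zero]; exact_mod_cast hpp.ne'
  · rw [tendsto_nhds_unique l1 l2, integral_mul_const, integral_complex_ofReal]
    ring

lemma pompeiu' {F : ℂ → ℂ} (hF : ContDiff ℝ ∞ F) (hc : HasCompactSupport F) (a : ℂ)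
    (hi : Integrable (fun z => dbar F z / (z - a))) :
    ∃ c : ℂ, c ≠ 0 ∧ ∫ z, dbar F z / (z - a) = c * F a := by
  have hd : ∀ z, dbar (fun w => F (w + a)) z = dbar F (z + a) := by
    intro z; simp only [dbar, fderiv_comp_add_right]
  have hi' : Integrable (fun z => dbar (fun w => F (w + a)) z / z) := by
    have := hi.comp_add_right a
    simpa [hd] using this
  obtain ⟨c, hc0, h⟩ := pompeiu (F := fun w => F (w + a))
    (hF.comp (contDiff_id.add contDiff_const))
    (hc.comp_homeomorph (Homeomorph.addRight a)) hi'
  refine ⟨c, hc0, ?_⟩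
  rw [zero_add] at h
  rw [← h, ← integral_add_right_eq_self (fun z => dbar F z / (z - a)) a]
  simp [hd]

lemma ae_im_ne_zero : ∀ᵐ z : ℂ, z.im ≠ 0 := by
  rw [ae_iff]
  have h := Measure.addHaar_submodule (volume : Measure ℂ) (LinearMap.ker Complex.imLm) (by
    intro h
    have : I ∈ LinearMap.ker Complex.imLm := by rw [h]; trivial
    simp at this)
  convert h using 2
  ext z
  simp

section
variable {B : Type*} [NormedAddCommGroup B] [NormedSpace ℂ B]

lemma isUnit_of_im {P : B →L[ℂ] B} (hspec : RealSpectrum P) {z : ℂ} (hz : z.im ≠ 0) :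
    IsUnit (z • (1 : B →L[ℂ] B) - P) := by
  by_contra h
  refine hz (hspec z ?_)
  rw [spectrum.mem_iff, Algebra.algebraMap_eq_smul_one]
  exact h

lemma res_aesm [CompleteSpace B] {P : B →L[ℂ] B} (hspec : RealSpectrum P) :
    AEStronglyMeasurable (res P) (volume : Measure ℂ) := by
  have ho : IsOpen {z : ℂ | z.im ≠ 0} := isOpen_ne_fun Complex.continuous_im continuous_const
  have hco : ContinuousOn (res P) {z : ℂ | z.im ≠ 0} := by
    intro z hz
    refine ContinuousAt.continuousWithinAt ?_
    obtain ⟨u, hu⟩ := isUnit_of_im hspec hz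
    have h1 := NormedRing.inverse_continuousAt u
    rw [hu] at h1
    exact h1.comp (f := fun z : ℂ => z • (1 : B →L[ℂ] B) - P) (by fun_prop)
  have := hco.aestronglyMeasurable (μ := volume) ho.measurableSet
  have hr : (volume : Measure ℂ).restrict {z : ℂ | z.im ≠ 0} = volume :=
    Measure.restrict_eq_self_of_ae_mem ae_im_ne_zero
  rwa [hr] at this

lemma bounded_by [CompleteSpace B] {P : B →L[ℂ] B} (hspec : RealSpectrum P)
    (hres : TemperateResolventLoc P)
    {h : ℂ → ℂ} (hm : AEStronglyMeasurable h (volume : Measure ℂ)) (hc : HasCompactSupport h)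
    (hb : ∀ N : ℕ, ∃ C : ℝ, ∀ z : ℂ, ‖h z‖ ≤ C * |z.im| ^ N) :
    Integrable (fun z => h z • res P z) := by
  obtain ⟨R, hR0, hR⟩ := hc.isCompact.isBounded.exists_pos_norm_le
  obtain ⟨C, M, hC0, hM0, hC⟩ := hres R hR0
  obtain ⟨N, hN⟩ := exists_nat_ge M
  obtain ⟨D, hD⟩ := hb N
  have hfin : Integrable (Set.indicator (Metric.closedBall (0:ℂ) R)
      (fun _ => |D| * C * R ^ ((N:ℝ) - M))) := by
    refine (integrableOn_const ?_).integrable_indicator Metric.isClosed_closedBall.measurableSet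
    exact (isCompact_closedBall _ _).measure_lt_top.ne
  refine hfin.mono' (hm.smul (res_aesm hspec)) ?_
  filter_upwards [ae_im_ne_zero] with z hz
  by_cases hzs : z ∈ tsupport h
  · have hzR := hR z hzs
    rw [Set.indicator_of_mem (by simpa using hzR), norm_smul]
    have hp : 0 < |z.im| := abs_pos.2 hz
    have h1 : ‖h z‖ ≤ |D| * |z.im| ^ N :=
      (hD z).trans (by gcongr; exact le_abs_self D)
    calc ‖h z‖ * ‖res P z‖ ≤ (|D| * |z.im| ^ N) * (C * |z.im| ^ (-M)) := by
          gcongr; exact hC z hz hzR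
      _ = |D| * C * |z.im| ^ ((N:ℝ) - M) := by
          rw [sub_eq_add_neg, Real.rpow_add hp, Real.rpow_natCast]; ring
      _ ≤ |D| * C * R ^ ((N:ℝ) - M) := by
          have : |z.im| ≤ R := (Complex.abs_im_le_norm z).trans hzR
          have : 0 ≤ (N:ℝ) - M := by linarith
          gcongr
  · rw [image_eq_zero_of_notMem_tsupport hzs, zero_smul, norm_zero]
    exact Set.indicator_nonneg (fun _ _ => by positivity) _
end


/-- Example 3, second half: if `f(P) = 0` for every `f ∈ C_0^∞(ℝ)` supported in an
open set `Ω` (i.e. `Ω` avoids the support of the calculus), then `Ω ∩ ℝ` lies in the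
resolvent set of `P`. -/
theorem support_contains_spectrum {B : Type*} [NormedAddCommGroup B] [NormedSpace ℂ B]
    [CompleteSpace B] (P : B →L[ℂ] B)
    (hspec : RealSpectrum P) (hres : TemperateResolventLoc P)
    (Ω : Set ℂ) (hΩ : IsOpen Ω)
    (hvanish : ∀ f : ℝ → ℂ, ContDiff ℝ (⊤ : ℕ∞) f → HasCompactSupport f →
      (∀ x ∈ tsupport f, (x : ℂ) ∈ Ω) →
      ∀ F : ℂ → ℂ, IsAHExt f F →
        (-(1/(π:ℂ))) • ∫ z : ℂ, dbar F z • res P z = 0) :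
    ∀ x : ℝ, (x : ℂ) ∈ Ω → (x : ℂ) ∉ spectrum ℂ P := by
  intro x hx
  obtain ⟨ε, hε, hball⟩ := Metric.isOpen_iff.1 hΩ x hx
  obtain ⟨f, F, hf, hfx, hts, hF⟩ := exists_ext x ε hε
  have h0 := hvanish f hf.1 hf.2 (by
    intro y hy
    apply hball
    have := hts hy
    rw [Metric.mem_closedBall] at this
    rw [Metric.mem_ball, Complex.dist_of_im_eq (by simp)]
    simp only [Complex.ofReal_re]
    linarith) F hF
  obtain ⟨hF1, hFc, hFf, hFb⟩ := hF
  have hI : ∫ z : ℂ, dbar F z • res P z = 0 := by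
    rcases smul_eq_zero.1 h0 with h | h
    · simp [Real.pi_ne_zero] at h
    · exact h
  have cd := dbar_continuous hF1
  let h : ℂ → ℂ := fun z => dbar F z / (z - x)
  have hm : AEStronglyMeasurable h volume := by
    have h1 : Measurable (dbar F) := cd.measurable
    exact (h1.div (by fun_prop)).aestronglyMeasurable
  have hhc : HasCompactSupport h := by
    have : h = fun z => dbar F z * (z - x)⁻¹ := by ext z; simp [h, div_eq_mul_inv]
    rw [this]
    exact (dbar_compact hFc).mul_right
  have hhb : ∀ N : ℕ, ∃ C : ℝ, ∀ z : ℂ, ‖h z‖ ≤ C * |z.im| ^ N := by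
    intro N
    obtain ⟨C, hC⟩ := hFb (N+1)
    refine ⟨|C|, fun z => ?_⟩
    simp only [h, norm_div]
    have h1 : |z.im| ≤ ‖z - x‖ := by simpa using Complex.abs_im_le_norm (z - x)
    rcases eq_or_lt_of_le (norm_nonneg (z - x)) with h2 | h2
    · rw [← h2, div_zero]; positivity
    · rw [div_le_iff₀ h2]
      calc ‖dbar F z‖ ≤ C * |z.im| ^ (N+1) := hC z
        _ ≤ |C| * |z.im| ^ (N+1) := by gcongr; exact le_abs_self C
        _ = |C| * |z.im| ^ N * |z.im| := by ring
        _ ≤ _ := by gcongr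
  have hhi : Integrable h := by
    obtain ⟨D, hD⟩ := hhb 0
    have hfin : Integrable (Set.indicator (tsupport h) (fun _ => D)) :=
      (integrableOn_const hhc.isCompact.measure_lt_top.ne).integrable_indicator
        (isClosed_tsupport h).measurableSet
    refine hfin.mono' hm (Filter.Eventually.of_forall fun z => ?_)
    by_cases hz : z ∈ tsupport h
    · rw [Set.indicator_of_mem hz]; simpa using hD z
    · rw [Set.indicator_of_notMem hz, image_eq_zero_of_notMem_tsupport hz, norm_zero]
  obtain ⟨c, hc0, hc⟩ := pompeiu' hF1 hFc x hhi
  rw [hFf, hfx, mul_one] at hc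
  have iQ := bounded_by hspec hres hm hhc hhb
  have iF := bounded_by hspec hres cd.aestronglyMeasurable (dbar_compact hFc) hFb
  set Q : B →L[ℂ] B := ∫ z, h z • res P z with hQ
  set A : B →L[ℂ] B := (x : ℂ) • (1 : B →L[ℂ] B) - P with hA
  have hne : ∀ z : ℂ, z.im ≠ 0 → z - x ≠ 0 := by
    intro z hz h
    apply hz
    simpa using congrArg Complex.im h
  have tot : ∫ z, (h z • (1 : B →L[ℂ] B) - dbar F z • res P z) = c • (1 : B →L[ℂ] B) := by
    rw [integral_sub (hhi.smul_const _) iF, hI, sub_zero, integral_smul_const, hc]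
  have hAQ : A * Q = c • 1 := by
    rw [← tot, hQ]
    have := (ContinuousLinearMap.mul ℂ (B →L[ℂ] B) A).integral_comp_comm iQ
    simp only [ContinuousLinearMap.mul_apply'] at this
    rw [← this]
    refine integral_congr_ae ?_
    filter_upwards [ae_im_ne_zero] with z hz
    have hinv : (z • (1 : B →L[ℂ] B) - P) * res P z = 1 :=
      Ring.mul_inverse_cancel _ (isUnit_of_im hspec hz)
    have : A = (z • (1 : B →L[ℂ] B) - P) - (z - x) • 1 := by
      rw [hA, sub_smul]; abel
    rw [mul_smul_comm, this, sub_mul, hinv, smul_mul_assoc, one_mul, smul_sub, smul_smul]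
    simp only [h]
    rw [div_mul_cancel₀ _ (hne z hz)]
  have hQA : Q * A = c • 1 := by
    rw [← tot, hQ]
    have := ((ContinuousLinearMap.mul ℂ (B →L[ℂ] B)).flip A).integral_comp_comm iQ
    simp only [ContinuousLinearMap.flip_apply, ContinuousLinearMap.mul_apply'] at this
    rw [← this]
    refine integral_congr_ae ?_
    filter_upwards [ae_im_ne_zero] with z hz
    have hinv : res P z * (z • (1 : B →L[ℂ] B) - P) = 1 :=
      Ring.inverse_mul_cancel _ (isUnit_of_im hspec hz)
    have : A = (z • (1 : B →L[ℂ] B) - P) - (z - x) • 1 := by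
      rw [hA, sub_smul]; abel
    rw [smul_mul_assoc, this, mul_sub, hinv, mul_smul_comm, mul_one, smul_sub, smul_smul]
    simp only [h]
    rw [div_mul_cancel₀ _ (hne z hz)]
  rw [spectrum.mem_iff, Algebra.algebraMap_eq_smul_one, not_not]
  exact ⟨⟨A, c⁻¹ • Q, by rw [mul_smul_comm, hAQ, smul_smul, inv_mul_cancel₀ hc0, one_smul],
    by rw [smul_mul_assoc, hQA, smul_smul, inv_mul_cancel₀ hc0, one_smul]⟩, rfl⟩
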